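/- Let C be an abelian category with Ext groups and let (F,G) be a 1-cotorsion pair cut on Thick(F) such that Ext^i(A,B)=0 for all A∈F, B∈G and all i≥1. Then (F∩G)^∧ = F^⊥ ∩ F^∧ = G ∩ F^∧, where F^⊥ = {N : Ext^i(A,N)=0 for all A∈F and all i≥1}. -/

import Mathlib

/-!
The key point is a description of `G` inside `T = Thick(F)`: an object `N ∈ T` lies in `G` as soon
as `Ext¹(A, N) = 0` for all `A ∈ F`. Indeed the right half of the cotorsion pair gives
`0 → N → B → W → 0` with `B ∈ G`, `W ∈ F`; this sequence splits, so `N` is a summand of `B`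
(`mem_G_of_ext_one`). Since `F^∧ ⊆ T`, this gives `F^⊥ ∩ F^∧ = G ∩ F^∧`, and dimension
shifting shows `(F ∩ G)^∧ ⊆ F^⊥`.

It remains to resolve `M ∈ G ∩ F^∧` by objects of `F ∩ G`. The left half of the cotorsion pair gives
`0 → K → A → M → 0` with `A ∈ F`, `K ∈ G`; by the description above `A ∈ G`, and `K ∈ T` again.
Iterating stops: if `M` has an `F`-resolution of length `n`, then `Ext^(n+1)(M, -)` vanishes
on `G`, each step lowers that degree by one, and in degree one the sequence splits, which puts `M`
in `F` (`resClass_inter_of_ext`).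
-/

open CategoryTheory

universe w v u

variable {C : Type u} [Category.{v} C] [Abelian C]

/-- `IsSES A B X` : there is a short exact sequence `0 → A → B → X → 0` in `C`. -/
def IsSES (A B X : C) : Prop :=
  ∃ (f : A ⟶ B) (g : B ⟶ X) (zero : f ≫ g = 0),
    (ShortComplex.mk f g zero).ShortExact

/-- `P` is closed under extensions. -/
def ClosedUnderExtensions (P : C → Prop) : Prop :=
  ∀ ⦃A B X : C⦄, IsSES A B X → P A → P X → P B

/-- `P` is closed under cones. -/
def ClosedUnderCones (P : C → Prop) : Prop :=
  ∀ ⦃A B X : C⦄, IsSES A B X → P A → P B → P X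

/-- `P` is closed under cocones. -/
def ClosedUnderCocones (P : C → Prop) : Prop :=
  ∀ ⦃A B X : C⦄, IsSES A B X → P B → P X → P A

/-- `P` is closed under isomorphisms. -/
def ClosedUnderIsos (P : C → Prop) : Prop :=
  ∀ ⦃X Y : C⦄, (X ≅ Y) → P X → P Y

/-- `P` is closed under direct summands. -/
def ClosedUnderSummands (P : C → Prop) : Prop :=
  ∀ ⦃X Y : C⦄, P X → (∃ (i : Y ⟶ X) (r : X ⟶ Y), i ≫ r = 𝟙 Y) → P Y

/-- `HasResLength P n M` : there is an exact sequence `0 → W_n → ⋯ → W_0 → M → 0`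
with all `W_i` in `P`. -/
inductive HasResLength (P : C → Prop) : ℕ → C → Prop
  | of_iso {M W : C} (hW : P W) (e : M ≅ W) : HasResLength P 0 M
  | step {K W M : C} {n : ℕ} (hW : P W) (h : IsSES K W M)
      (hK : HasResLength P n K) : HasResLength P (n + 1) M

/-- `P^∧` : the class of objects admitting a finite `P`-resolution. -/
def ResClass (P : C → Prop) : C → Prop := fun M => ∃ n, HasResLength P n M

/-- The resolution dimension `resdim_P(M) ∈ ℕ∞`. -/
noncomputable def resDim (P : C → Prop) (M : C) : ℕ∞ :=
  sInf {n : ℕ∞ | ∃ m : ℕ, n = (m : ℕ∞) ∧ HasResLength P m M}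

/-- `HasCoresLength P n M` : there is an exact sequence `0 → M → W_0 → ⋯ → W_n → 0`
with all `W_i` in `P`. -/
inductive HasCoresLength (P : C → Prop) : ℕ → C → Prop
  | of_iso {M W : C} (hW : P W) (e : M ≅ W) : HasCoresLength P 0 M
  | step {M W K : C} {n : ℕ} (hW : P W) (h : IsSES M W K)
      (hK : HasCoresLength P n K) : HasCoresLength P (n + 1) M

/-- `ω ∩ S` is a relative generator in `ω` : every `W ∈ ω` fits in a short exact
sequence `0 → W' → F → W → 0` with `F ∈ ω ∩ S` and `W' ∈ ω`. -/
def RelGenerator (ω S : C → Prop) : Prop :=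
  ∀ ⦃W : C⦄, ω W → ∃ (W' F : C), ω W' ∧ (ω F ∧ S F) ∧ IsSES W' F W

/-- `P` is left thick : closed under extensions, direct summands and cocones. -/
def LeftThick (P : C → Prop) : Prop :=
  ClosedUnderExtensions P ∧ ClosedUnderSummands P ∧ ClosedUnderCocones P

/-- `P` is right thick : closed under extensions, direct summands and cones. -/
def RightThick (P : C → Prop) : Prop :=
  ClosedUnderExtensions P ∧ ClosedUnderSummands P ∧ ClosedUnderCones P

/-- The smallest thick class (closed under extensions, direct summands, cones and
cocones) containing `P`. -/
inductive ThickClosure (P : C → Prop) : C → Prop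
  | of {M : C} (h : P M) : ThickClosure P M
  | ext {A B X : C} (h : IsSES A B X) (hA : ThickClosure P A) (hX : ThickClosure P X) :
      ThickClosure P B
  | cone {A B X : C} (h : IsSES A B X) (hA : ThickClosure P A) (hB : ThickClosure P B) :
      ThickClosure P X
  | cocone {A B X : C} (h : IsSES A B X) (hB : ThickClosure P B) (hX : ThickClosure P X) :
      ThickClosure P A
  | summand {X Y : C} (hX : ThickClosure P X) (i : Y ⟶ X) (r : X ⟶ Y) (hir : i ≫ r = 𝟙 Y) :
      ThickClosure P Y

section WithExt

variable [HasExt.{w} C]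

/-- `Ext^i(A, B) = 0` for all `A ∈ P`, `B ∈ Q` and all `i ≥ 1`. -/
def ExtVanish (P Q : C → Prop) : Prop :=
  ∀ ⦃A B : C⦄, P A → Q B → ∀ i : ℕ, 1 ≤ i → Subsingleton (Abelian.Ext A B i)

/-- `(X, ω)` is a left Frobenius pair in `C`. -/
def IsLeftFrobenius (X ω : C → Prop) : Prop :=
  LeftThick X ∧ (∀ ⦃W : C⦄, ω W → X W) ∧ ClosedUnderSummands ω ∧
    ExtVanish X ω ∧
    (∀ ⦃A : C⦄, X A → ∃ (W A' : C), ω W ∧ X A' ∧ IsSES A W A')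

/-- `(X, ω)` is a left Frobenius pair cut on `S`. -/
def IsLeftFrobeniusCut (X ω S : C → Prop) : Prop :=
  LeftThick X ∧
  IsLeftFrobenius (fun M => X M ∧ S M) (fun M => ω M ∧ S M) ∧
  (ExtVanish (fun M => ω M ∧ S M) ω ∧ RelGenerator ω S) ∧
  (ClosedUnderExtensions ω ∧ ClosedUnderSummands ω)

/-- `(A, B)` is a left weak AB context cut on `S`. -/
def IsLeftWeakABCut (A B S : C → Prop) : Prop :=
  IsLeftFrobeniusCut A (fun M => A M ∧ B M) S ∧
  RightThick (fun M => B M ∧ S M) ∧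
  (∀ ⦃M : C⦄, B M → S M → ResClass (fun N => A N ∧ S N) M)

/-- `(U, V)` is a left 1-cotorsion pair cut on `T`. -/
def IsLeft1CotorsionCut (U V T : C → Prop) : Prop :=
  ClosedUnderSummands U ∧
  (∀ ⦃A B : C⦄, U A → T A → V B → Subsingleton (Abelian.Ext A B 1)) ∧
  (∀ ⦃t : C⦄, T t → ∃ (K A : C), U A ∧ (∃ V' : C, V V' ∧ Nonempty (K ≅ V')) ∧ IsSES K A t)

/-- `(U, V)` is a right 1-cotorsion pair cut on `T`. -/
def IsRight1CotorsionCut (U V T : C → Prop) : Prop :=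
  ClosedUnderSummands V ∧
  (∀ ⦃A B : C⦄, U A → V B → T B → Subsingleton (Abelian.Ext A B 1)) ∧
  (∀ ⦃t : C⦄, T t → ∃ (B W : C), V B ∧ (∃ U' : C, U U' ∧ Nonempty (W ≅ U')) ∧ IsSES t B W)

/-- `(U, V)` is a 1-cotorsion pair cut on `T`. -/
def Is1CotorsionCut (U V T : C → Prop) : Prop :=
  IsLeft1CotorsionCut U V T ∧ IsRight1CotorsionCut U V T

/-- `(A, B)` is a left `n`-cotorsion pair cut on `S`. -/
def IsLeftNCotorsionCut (n : ℕ) (A B S : C → Prop) : Prop :=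
  ClosedUnderSummands A ∧
  (∀ ⦃X Y : C⦄, A X → S X → B Y → ∀ i : ℕ, 1 ≤ i → i ≤ n → Subsingleton (Abelian.Ext X Y i)) ∧
  (∀ ⦃s : C⦄, S s → ∃ (K X : C), A X ∧ (∃ m : ℕ, m ≤ n - 1 ∧ HasResLength B m K) ∧ IsSES K X s)

/-- `(A, B)` is a right `n`-cotorsion pair cut on `S`. -/
def IsRightNCotorsionCut (n : ℕ) (A B S : C → Prop) : Prop :=
  ClosedUnderSummands B ∧
  (∀ ⦃X Y : C⦄, A X → B Y → S Y → ∀ i : ℕ, 1 ≤ i → i ≤ n → Subsingleton (Abelian.Ext X Y i)) ∧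
  (∀ ⦃s : C⦄, S s → ∃ (Y W : C), B Y ∧ (∃ m : ℕ, m ≤ n - 1 ∧ HasCoresLength A m W) ∧ IsSES s Y W)

/-- `(F, G)` is a complete cotorsion pair in `T`. -/
def IsCompleteCotorsionPairIn (T F G : C → Prop) : Prop :=
  (∀ ⦃M : C⦄, F M → T M) ∧ (∀ ⦃M : C⦄, G M → T M) ∧
  ClosedUnderSummands F ∧ ClosedUnderSummands G ∧
  (∀ ⦃A B : C⦄, F A → G B → Subsingleton (Abelian.Ext A B 1)) ∧
  (∀ ⦃M : C⦄, T M →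
    (∃ G₁ F₁ : C, G G₁ ∧ F F₁ ∧ IsSES G₁ F₁ M) ∧
    (∃ G₂ F₂ : C, G G₂ ∧ F F₂ ∧ IsSES M G₂ F₂))

end WithExt

section ExtLemmas

variable [HasExt.{w} C]

lemma IsSES.ext_middle {A B X : C} (h : IsSES A B X) (Y : C) (n : ℕ)
    (hA : Subsingleton (Abelian.Ext Y A n)) (hX : Subsingleton (Abelian.Ext Y X n)) :
    Subsingleton (Abelian.Ext Y B n) := by
  obtain ⟨f, g, zero, hS⟩ := h
  refine subsingleton_of_forall_eq 0 fun x => ?_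
  obtain ⟨y, rfl⟩ := Abelian.Ext.covariant_sequence_exact₂ Y hS x (hX.elim _ _)
  rw [show y = 0 from hA.elim _ _, Abelian.Ext.zero_comp]

lemma IsSES.ext_right {A B X : C} (h : IsSES A B X) (Y : C) (n : ℕ)
    (hB : Subsingleton (Abelian.Ext Y B n)) (hA : Subsingleton (Abelian.Ext Y A (n + 1))) :
    Subsingleton (Abelian.Ext Y X n) := by
  obtain ⟨f, g, zero, hS⟩ := h
  refine subsingleton_of_forall_eq 0 fun x => ?_
  obtain ⟨y, rfl⟩ := Abelian.Ext.covariant_sequence_exact₃ Y hS x rfl (hA.elim _ _)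
  rw [show y = 0 from hB.elim _ _, Abelian.Ext.zero_comp]

lemma IsSES.ext_from_right {A B X : C} (h : IsSES A B X) (Y : C) (n : ℕ)
    (hA : Subsingleton (Abelian.Ext A Y n)) (hB : Subsingleton (Abelian.Ext B Y (n + 1))) :
    Subsingleton (Abelian.Ext X Y (n + 1)) := by
  obtain ⟨f, g, zero, hS⟩ := h
  refine subsingleton_of_forall_eq 0 fun x => ?_
  obtain ⟨y, rfl⟩ := Abelian.Ext.contravariant_sequence_exact₃ hS Y x (hB.elim _ _)
    (add_comm 1 n)
  rw [show y = 0 from hA.elim _ _, Abelian.Ext.comp_zero]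

lemma IsSES.ext_from_left {A B X : C} (h : IsSES A B X) (Y : C) (n : ℕ)
    (hB : Subsingleton (Abelian.Ext B Y n)) (hX : Subsingleton (Abelian.Ext X Y (n + 1))) :
    Subsingleton (Abelian.Ext A Y n) := by
  obtain ⟨f, g, zero, hS⟩ := h
  refine subsingleton_of_forall_eq 0 fun x => ?_
  obtain ⟨y, rfl⟩ := Abelian.Ext.contravariant_sequence_exact₁ hS Y x (add_comm 1 n)
    (hX.elim _ _)
  rw [show y = 0 from hB.elim _ _, Abelian.Ext.comp_zero]

/-- A short exact sequence with vanishing `Ext¹` splits on the right: lift the identity of `X`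
along `Hom(X, B) → Hom(X, X) → Ext¹(X, A)`. -/
lemma IsSES.exists_section {A B X : C} (h : IsSES A B X)
    (hE : Subsingleton (Abelian.Ext X A 1)) :
    ∃ (i : X ⟶ B) (r : B ⟶ X), i ≫ r = 𝟙 X := by
  obtain ⟨f, g, zero, hS⟩ := h
  obtain ⟨y, hy⟩ := Abelian.Ext.covariant_sequence_exact₃ X hS (Abelian.Ext.mk₀ (𝟙 X))
    (zero_add 1) (hE.elim _ _)
  obtain ⟨s, rfl⟩ := (Abelian.Ext.mk₀_bijective _ _).2 y
  refine ⟨s, g, (Abelian.Ext.mk₀_bijective _ _).1 ?_⟩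
  rw [← hy, Abelian.Ext.mk₀_comp_mk₀]

/-- A short exact sequence with vanishing `Ext¹` splits on the left: extend the identity of `A`
along `Hom(B, A) → Hom(A, A) → Ext¹(X, A)`. -/
lemma IsSES.exists_retraction {A B X : C} (h : IsSES A B X)
    (hE : Subsingleton (Abelian.Ext X A 1)) :
    ∃ (i : A ⟶ B) (r : B ⟶ A), i ≫ r = 𝟙 A := by
  obtain ⟨f, g, zero, hS⟩ := h
  obtain ⟨y, hy⟩ := Abelian.Ext.contravariant_sequence_exact₁ hS A (Abelian.Ext.mk₀ (𝟙 A))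
    (add_zero 1) (hE.elim _ _)
  obtain ⟨s, rfl⟩ := (Abelian.Ext.mk₀_bijective _ _).2 y
  refine ⟨f, s, (Abelian.Ext.mk₀_bijective _ _).1 ?_⟩
  rw [← hy, Abelian.Ext.mk₀_comp_mk₀]

end ExtLemmas

lemma ClosedUnderSummands.of_iso {P : C → Prop} (hP : ClosedUnderSummands P) {X Y : C}
    (e : Y ≅ X) (hX : P X) : P Y :=
  hP hX ⟨e.hom, e.inv, e.hom_inv_id⟩

lemma HasResLength.mono {P Q : C → Prop} (hPQ : ∀ X, P X → Q X) {n : ℕ} {M : C}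
    (h : HasResLength P n M) : HasResLength Q n M := by
  induction h with
  | of_iso hW e => exact .of_iso (hPQ _ hW) e
  | step hW hS _ ih => exact .step (hPQ _ hW) hS ih

lemma HasResLength.thickClosure {P : C → Prop} {n : ℕ} {M : C}
    (h : HasResLength P n M) : ThickClosure P M := by
  induction h with
  | of_iso hW e => exact .summand (.of hW) e.hom e.inv e.hom_inv_id
  | step hW hS _ ih => exact .cone hS ih (.of hW)

section Cotorsion

variable [HasExt.{w} C] {F G : C → Prop}

/-- An `F`-resolution of length `n` kills `Ext^i(-, N)`, `N ∈ G`, in all degrees `i > n`. -/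
lemma HasResLength.ext_vanish (hF : ClosedUnderSummands F) (hvan : ExtVanish F G) {n : ℕ} {M : C}
    (h : HasResLength F n M) {N : C} (hN : G N) :
    ∀ i : ℕ, n < i → Subsingleton (Abelian.Ext M N i) := by
  induction h with
  | of_iso hW e => exact fun i hi => hvan (hF.of_iso e hW) hN i hi
  | step hW hS _ ih =>
    rintro (_ | i) hi
    · omega
    · exact hS.ext_from_right N i (ih i (by omega)) (hvan hW hN _ (by omega))

/-- `(F ∩ G)^∧ ⊆ F^⊥`. -/
lemma HasResLength.mem_perp (hG : ClosedUnderSummands G)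
    (hvan : ExtVanish F G) {n : ℕ} {M : C} (h : HasResLength (fun N => F N ∧ G N) n M)
    {A : C} (hA : F A) : ∀ i : ℕ, 1 ≤ i → Subsingleton (Abelian.Ext A M i) := by
  induction h with
  | of_iso hW e => exact fun i hi => hvan hA (hG.of_iso e hW.2) i hi
  | step hW hS _ ih =>
    exact fun i hi => hS.ext_right A i (hvan hA hW.2 i hi) (ih _ (by omega))

/-- Inside `Thick(F)`, the class `G` contains every object right `Ext¹`-orthogonal to `F`. -/
lemma mem_G_of_ext_one (h : IsRight1CotorsionCut F G (ThickClosure F)) {N : C}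
    (hN : ThickClosure F N) (hE : ∀ A, F A → Subsingleton (Abelian.Ext A N 1)) : G N := by
  obtain ⟨B, W, hB, ⟨U', hU', ⟨e⟩⟩, hS⟩ := h.2.2 hN
  refine h.1 hB (hS.exists_retraction ?_)
  -- `W` is only isomorphic to an object of `F`, and `F` need not be iso-closed here:
  -- transport the vanishing of `Ext¹` along `e`.
  have := hE U' hU'
  refine subsingleton_of_forall_eq 0 fun x => ?_
  rw [← Abelian.Ext.mk₀_id_comp x, ← e.hom_inv_id, ← Abelian.Ext.mk₀_comp_mk₀_assoc,
    show (Abelian.Ext.mk₀ e.inv).comp x (zero_add 1) = 0 from Subsingleton.elim _ _,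
    Abelian.Ext.comp_zero]

/-- Vanishing of `Ext^(n+1)(M, -)` on `G ∩ Thick(F)` bounds the number of steps needed to
resolve `M ∈ G ∩ Thick(F)` by `F ∩ G`. -/
lemma resClass_inter_of_ext (h : Is1CotorsionCut F G (ThickClosure F)) (hvan : ExtVanish F G)
    (n : ℕ) : ∀ M : C, ThickClosure F M → G M →
      (∀ N, G N → ThickClosure F N → Subsingleton (Abelian.Ext M N (n + 1))) →
      HasResLength (fun N => F N ∧ G N) n M := by
  induction n with
  | zero =>
    intro M hT hM hE
    obtain ⟨K, A, hA, ⟨V', hV', ⟨e⟩⟩, hS⟩ := h.1.2.2 hT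
    have hK := h.2.1.of_iso e hV'
    exact .of_iso ⟨h.1.1 hA (hS.exists_section (hE K hK (.cocone hS (.of hA) hT))), hM⟩
      (Iso.refl M)
  | succ n ih =>
    intro M hT hM hE
    obtain ⟨K, A, hA, ⟨V', hV', ⟨e⟩⟩, hS⟩ := h.1.2.2 hT
    have hK := h.2.1.of_iso e hV'
    have hGA : G A := mem_G_of_ext_one h.2 (.of hA) fun B hB =>
      hS.ext_middle B 1 (hvan hB hK 1 le_rfl) (hvan hB hM 1 le_rfl)
    exact .step ⟨hA, hGA⟩ hS (ih K (.cocone hS (.of hA) hT) hK fun N hN hNT =>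
      hS.ext_from_left N (n + 1) (hvan hA hN _ (by omega)) (hE N hN hNT))

end Cotorsion

theorem stmt_12 [HasExt.{w} C] (F G : C → Prop)
    (h : Is1CotorsionCut F G (ThickClosure F))
    (hvan : ExtVanish F G) :
    ∀ M : C,
      (ResClass (fun N => F N ∧ G N) M ↔
        ((∀ ⦃A : C⦄, F A → ∀ i : ℕ, 1 ≤ i → Subsingleton (Abelian.Ext A M i)) ∧
          ResClass F M)) ∧
      (ResClass (fun N => F N ∧ G N) M ↔ (G M ∧ ResClass F M)) := by
  intro M
  have perp : ResClass (fun N => F N ∧ G N) M →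
      ((∀ ⦃A : C⦄, F A → ∀ i : ℕ, 1 ≤ i → Subsingleton (Abelian.Ext A M i)) ∧
        ResClass F M) := fun ⟨n, hn⟩ =>
    ⟨fun A hA => hn.mem_perp h.2.1 hvan hA, n, hn.mono fun _ hX => hX.1⟩
  have toG : ((∀ ⦃A : C⦄, F A → ∀ i : ℕ, 1 ≤ i → Subsingleton (Abelian.Ext A M i)) ∧
      ResClass F M) → G M ∧ ResClass F M := fun ⟨hE, n, hn⟩ =>
    ⟨mem_G_of_ext_one h.2 hn.thickClosure fun A hA => hE hA 1 le_rfl, n, hn⟩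
  have back : G M ∧ ResClass F M → ResClass (fun N => F N ∧ G N) M := fun ⟨hM, n, hn⟩ =>
    ⟨n, resClass_inter_of_ext h hvan n M hn.thickClosure hM fun N hN _ =>
      hn.ext_vanish h.1.1 hvan hN _ (Nat.lt_succ_self n)⟩
  exact ⟨⟨perp, back ∘ toG⟩, ⟨toG ∘ perp, back⟩⟩
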